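/- Let 1 ≤ j ≤ N−2 and let m_{j+1} ≥ m_{j+2} ≥ … ≥ m_{N−1} ≥ m_N := 0 be nonnegative integers. Set Y = ∏_{a=j+2}^{N−1} U(t^{a−1}_{m_{a−1}−m_a+1},…,t^{a−1}_{m_{a−1}}; t^a_1,…,t^a_{m_a}). Then the rational function obtained by successively applying the q-symmetrizations over the variables of type j+2, then type j+3, …, then type N−1 to Y, i.e. Sym_{t^{j+2}_{1..m_{j+2}}}( ⋯ Sym_{t^{N−1}_{1..m_{N−1}}}(Y) ⋯ ), is symmetric (invariant under every plain permutation of the variables) within each group {t^{j+1}_{m_{j+1}−m_a+1},…,t^{j+1}_{m_{j+1}−m_{a+1}}} for a = j+1,…,N−1. -/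

import Mathlib

open scoped BigOperators
open MvPolynomial

noncomputable section

/-- The base field `ℂ(q)`. -/
abbrev F0 : Type := RatFunc ℂ

/-- The field `K` of rational functions over `ℂ(q)` in the variables `t^a_ℓ`,
indexed by pairs `(a, ℓ) : ℕ × ℕ`. -/
abbrev K2 : Type := FractionRing (MvPolynomial (ℕ × ℕ) F0)

/-- The element `q` of `K`. -/
def q2 : K2 := algebraMap (MvPolynomial (ℕ × ℕ) F0) _ (C RatFunc.X)

/-- The variable `t^a_ℓ`. -/
def tV (a ℓ : ℕ) : K2 := algebraMap (MvPolynomial (ℕ × ℕ) F0) _ (X (a, ℓ))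

/-- The interval `{lo+1, …, lo+k} ⊆ ℕ` identified with `Fin k`. -/
def intervalEquiv (lo k : ℕ) : Fin k ≃ {x : ℕ // lo + 1 ≤ x ∧ x < lo + 1 + k} where
  toFun i := ⟨lo + 1 + (i : ℕ), ⟨Nat.le_add_right _ _, by have := i.isLt; omega⟩⟩
  invFun x := ⟨(x : ℕ) - (lo + 1), by have := x.2; omega⟩
  left_inv i := Fin.ext (by simp)
  right_inv x := Subtype.ext (by have := x.2; simp; omega)

/-- The permutation of `ℕ` acting as `σ` on the interval `{lo+1,…,lo+k}`
(sending `lo+1+i ↦ lo+1+σ(i)`) and as the identity elsewhere. -/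
def intervalPerm (lo k : ℕ) (σ : Equiv.Perm (Fin k)) : Equiv.Perm ℕ :=
  σ.extendDomain (intervalEquiv lo k)

/-- The permutation of the variable indices permuting the second component of
variables of type `a` by `intervalPerm lo k σ`, fixing all other variables. -/
def blockPerm (a lo k : ℕ) (σ : Equiv.Perm (Fin k)) : Equiv.Perm (ℕ × ℕ) :=
  Equiv.prodShear (Equiv.refl ℕ)
    (fun b => if b = a then intervalPerm lo k σ else Equiv.refl ℕ)

/-- The substitution field automorphism of `K` induced by a permutation
of the variable indices. -/
def liftP (e : Equiv.Perm (ℕ × ℕ)) : K2 ≃+* K2 :=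
  IsFractionRing.ringEquivOfRingEquiv (MvPolynomial.renameEquiv F0 e).toRingEquiv

/-- The q-symmetrization over the group of variables `t^a_ℓ`, `lo < ℓ ≤ lo + k`. -/
def symBlock (a lo k : ℕ) (G : K2) : K2 :=
  ∑ σ : Equiv.Perm (Fin k),
    (∏ p ∈ Finset.univ.filter
        (fun p : Fin k × Fin k => p.1 < p.2 ∧ σ p.2 < σ p.1),
      (q2 * tV a (lo + 1 + (σ p.2 : ℕ)) - q2⁻¹ * tV a (lo + 1 + (σ p.1 : ℕ))) /
        (q2⁻¹ * tV a (lo + 1 + (σ p.2 : ℕ)) - q2 * tV a (lo + 1 + (σ p.1 : ℕ)))) *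
      liftP (blockPerm a lo k σ) G

/-- `U(x₁,…,x_k; y₁,…,y_k) = ∏_i (y_i/x_i)/(1−y_i/x_i) ·
∏_{m<n} (q⁻¹ − q·y_m/x_n)/(1 − y_m/x_n)` (for `1`-based families `x y : ℕ → K`). -/
def Ub (x y : ℕ → K2) (k : ℕ) : K2 :=
  (∏ i ∈ Finset.range k, (y (i + 1) / x (i + 1)) / (1 - y (i + 1) / x (i + 1))) *
    ∏ p ∈ (Finset.range k ×ˢ Finset.range k).filter (fun p => p.1 < p.2),
      (q2⁻¹ - q2 * y (p.1 + 1) / x (p.2 + 1)) / (1 - y (p.1 + 1) / x (p.2 + 1))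

/-- The composition of q-symmetrizations
`Sym_{t^{N−k}} ∘ ⋯ ∘ Sym_{t^{N−2}} ∘ Sym_{t^{N−1}}`, each over the full set of
variables `t^a_1,…,t^a_{m_a}` of its type. -/
def iterSym (N : ℕ) (m : ℕ → ℕ) : ℕ → K2 → K2
  | 0, G => G
  | (k + 1), G => symBlock (N - 1 - k) 0 (m (N - 1 - k)) (iterSym N m k G)

/-- `Y = ∏_{a=j+2}^{N−1} U(t^{a−1}_{m_{a−1}−m_a+1},…,t^{a−1}_{m_{a−1}}; t^a_1,…,t^a_{m_a})`. -/
def Ycur (N j : ℕ) (m : ℕ → ℕ) : K2 :=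
  ∏ a ∈ Finset.Icc (j + 2) (N - 1),
    Ub (fun i => tV (a - 1) (m (a - 1) - m a + i)) (fun i => tV a i) (m a)

/-!
Put `Δ(y) = ∏_{i<j} (q⁻¹ y_i - q y_j)`. The weight of `σ` in the q-symmetrization is
`sgn(σ) Δ(y ∘ σ) / Δ(y)`, a `1`-cocycle; hence `Sym (w_τ · τG) = Sym G` for every `τ`, and
`Sym A = Sym B` as soon as `(q⁻¹ y_i - q y_{i+1}) (A - B)` is invariant under `y_i ↔ y_{i+1}`.
An explicit identity in four variables shows that this applies to `A = U(x; y)` and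
`B = U(x; y)` with `x_i` and `x_{i+1}` exchanged, and to their multiples by any factor fixed by both
transpositions. So `Sym_y (U(x; y) F)` is invariant under `x_i ↔ x_{i+1}`: the symmetry of `F`
in the variables of one type is passed on to the variables of the previous type, and the theorem
follows by induction on the types.
-/

section QWeight

variable {K : Type*} [Field K] {k : ℕ}

/-- The q-analogue `∏_{i<j} (q⁻¹ y_i - q y_j)` of the Vandermonde product. -/
def qVandermonde (q : K) (y : Fin k → K) : K :=
  ∏ j, ∏ i ∈ Finset.Iio j, (q⁻¹ * y i - q * y j)

/-- The coefficient of the summand of `σ` in the q-symmetrization over the variables `y`. -/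
def qWeight (q : K) (y : Fin k → K) (σ : Equiv.Perm (Fin k)) : K :=
  ∏ p ∈ Finset.univ.filter (fun p : Fin k × Fin k => p.1 < p.2 ∧ σ p.2 < σ p.1),
    (q * y (σ p.2) - q⁻¹ * y (σ p.1)) / (q⁻¹ * y (σ p.2) - q * y (σ p.1))

lemma map_qWeight {L E : Type*} [Field L] [FunLike E K L] [RingHomClass E K L] (φ : E) (q : K)
    (y : Fin k → K) (σ : Equiv.Perm (Fin k)) : φ (qWeight q y σ) = qWeight (φ q) (φ ∘ y) σ := by
  simp only [qWeight, map_prod, map_div₀, map_sub, map_mul, map_inv₀, Function.comp_apply]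

lemma qVandermonde_ne_zero {q : K} {y : Fin k → K}
    (h : Pairwise fun i j => q⁻¹ * y i - q * y j ≠ 0) : qVandermonde q y ≠ 0 :=
  Finset.prod_ne_zero_iff.2 fun _ _ => Finset.prod_ne_zero_iff.2 fun _ hi =>
    h (Finset.mem_Iio.1 hi).ne

/-- The antisymmetric function of `(i, j)` equal to `q⁻¹ y_i - q y_j` for `i < j`. -/
def antisymmFactor (q : K) (y : Fin k → K) (i j : Fin k) : K :=
  if i < j then q⁻¹ * y i - q * y j else if j < i then -(q⁻¹ * y j - q * y i) else 0

lemma antisymmFactor_swap (q : K) (y : Fin k → K) (i j : Fin k) :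
    antisymmFactor q y i j = -antisymmFactor q y j i := by
  rcases lt_trichotomy i j with h | rfl | h <;> simp [antisymmFactor, *, not_lt_of_gt]

lemma prod_antisymmFactor_comp (q : K) (y : Fin k → K) (σ : Equiv.Perm (Fin k)) :
    ∏ j, ∏ i ∈ Finset.Iio j, antisymmFactor q y (σ i) (σ j) = σ.sign * qVandermonde q y := by
  rw [σ.prod_Iio_comp_eq_sign_mul_prod (antisymmFactor_swap q y), qVandermonde]
  congr 1
  exact Finset.prod_congr rfl fun j _ => Finset.prod_congr rfl fun i hi =>
    if_pos (Finset.mem_Iio.1 hi)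

lemma qWeight_eq_prod_div_antisymmFactor {q : K} {y : Fin k → K}
    (h : Pairwise fun i j => q⁻¹ * y i - q * y j ≠ 0) (σ : Equiv.Perm (Fin k)) :
    qWeight q y σ = ∏ j, ∏ i ∈ Finset.Iio j,
      (q⁻¹ * y (σ i) - q * y (σ j)) / antisymmFactor q y (σ i) (σ j) := by
  rw [← Finset.prod_finset_product_right' (Finset.univ.filter fun p : Fin k × Fin k => p.1 < p.2)
      Finset.univ Finset.Iio (by simp)
      (f := fun i j => (q⁻¹ * y (σ i) - q * y (σ j)) / antisymmFactor q y (σ i) (σ j)),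
    qWeight, ← Finset.filter_filter, Finset.prod_filter]
  refine Finset.prod_congr rfl fun p hp => ?_
  have hne : σ p.1 ≠ σ p.2 := σ.injective.ne (Finset.mem_filter.1 hp).2.ne
  rcases hne.lt_or_gt with hlt | hgt
  · rw [if_neg hlt.not_gt, antisymmFactor, if_pos hlt, div_self (h hne)]
  · rw [if_pos hgt, antisymmFactor, if_neg hgt.not_gt, if_pos hgt, div_neg, ← neg_div, neg_sub]

lemma qWeight_eq_sign_mul_div {q : K} {y : Fin k → K}
    (h : Pairwise fun i j => q⁻¹ * y i - q * y j ≠ 0) (σ : Equiv.Perm (Fin k)) :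
    qWeight q y σ = σ.sign * qVandermonde q (y ∘ σ) / qVandermonde q y := by
  have hsign : ((σ.sign : ℤ) : K)⁻¹ = (σ.sign : ℤ) := by
    rcases Int.units_eq_one_or σ.sign with h1 | h1 <;> simp [h1]
  rw [qWeight_eq_prod_div_antisymmFactor h]
  simp only [Finset.prod_div_distrib]
  rw [prod_antisymmFactor_comp, div_mul_eq_div_div, div_eq_mul_inv _ ((σ.sign : ℤ) : K), hsign,
    mul_comm]
  rfl

lemma qWeight_mul {q : K} {y : Fin k → K}
    (h : Pairwise fun i j => q⁻¹ * y i - q * y j ≠ 0) (σ τ : Equiv.Perm (Fin k)) :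
    qWeight q y (σ * τ) = qWeight q y σ * qWeight q (y ∘ σ) τ := by
  have hσ : Pairwise fun i j => q⁻¹ * (y ∘ σ) i - q * (y ∘ σ) j ≠ 0 :=
    fun i j hij => h (σ.injective.ne hij)
  have hVσ := qVandermonde_ne_zero hσ
  rw [qWeight_eq_sign_mul_div h, qWeight_eq_sign_mul_div h, qWeight_eq_sign_mul_div hσ,
    Equiv.Perm.sign_mul, Equiv.Perm.coe_mul, Function.comp_assoc]
  push_cast
  field_simp

lemma qWeight_swap_of_val_eq_succ (q : K) (y : Fin k → K) {i j : Fin k} (hij : (j : ℕ) = i + 1) :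
    qWeight q y (Equiv.swap i j) = (q * y i - q⁻¹ * y j) / (q⁻¹ * y i - q * y j) := by
  have hinv : Finset.univ.filter (fun p : Fin k × Fin k =>
      p.1 < p.2 ∧ Equiv.swap i j p.2 < Equiv.swap i j p.1) = {(i, j)} := by
    ext ⟨m, n⟩
    simp only [Finset.mem_filter, Finset.mem_univ, true_and, Finset.mem_singleton, Prod.mk.injEq,
      Equiv.swap_apply_def, Fin.lt_def, Fin.ext_iff]
    split_ifs <;> omega
  rw [qWeight, hinv, Finset.prod_singleton, Equiv.swap_apply_left, Equiv.swap_apply_right]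

end QWeight

section Substitution

lemma liftP_algebraMap (e : Equiv.Perm (ℕ × ℕ)) (p : MvPolynomial (ℕ × ℕ) F0) :
    liftP e (algebraMap _ K2 p) = algebraMap _ K2 (rename e p) :=
  IsFractionRing.ringEquivOfRingEquiv_algebraMap _ p

lemma liftP_tV (e : Equiv.Perm (ℕ × ℕ)) (a ℓ : ℕ) :
    liftP e (tV a ℓ) = tV (e (a, ℓ)).1 (e (a, ℓ)).2 := by
  rw [tV, liftP_algebraMap, rename_X, tV]

lemma liftP_tV_of_fixed {e : Equiv.Perm (ℕ × ℕ)} {a ℓ : ℕ} (h : e (a, ℓ) = (a, ℓ)) :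
    liftP e (tV a ℓ) = tV a ℓ := by
  rw [liftP_tV, h]

lemma liftP_q2 (e : Equiv.Perm (ℕ × ℕ)) : liftP e q2 = q2 := by
  rw [q2, liftP_algebraMap, rename_C]

lemma liftP_one (G : K2) : liftP 1 G = G := by
  have h : (renameEquiv F0 (1 : Equiv.Perm (ℕ × ℕ))).toRingEquiv = RingEquiv.refl _ :=
    RingEquiv.ext rename_id_apply
  rw [liftP, h, IsFractionRing.ringEquivOfRingEquiv_refl, RingEquiv.refl_apply]

lemma liftP_mul (e f : Equiv.Perm (ℕ × ℕ)) (G : K2) :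
    liftP (e * f) G = liftP e (liftP f G) := by
  have h : (renameEquiv F0 (e * f)).toRingEquiv =
      (renameEquiv F0 f).toRingEquiv.trans (renameEquiv F0 e).toRingEquiv :=
    RingEquiv.ext fun p => (rename_rename f e p).symm
  rw [liftP, h, IsFractionRing.ringEquivOfRingEquiv_comp K2 K2 K2, RingEquiv.trans_apply, liftP,
    liftP]

lemma liftP_swap_tV (b ℓ ℓ' n : ℕ) :
    liftP (Equiv.swap (b, ℓ) (b, ℓ')) (tV b n) = tV b (Equiv.swap ℓ ℓ' n) := by
  rw [liftP_tV, ← (Prod.mk_right_injective b).map_swap]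

lemma swap_apply_of_fst_ne {a b : ℕ} (hab : a ≠ b) (ℓ ℓ' n : ℕ) :
    Equiv.swap (b, ℓ) (b, ℓ') (a, n) = (a, n) :=
  Equiv.swap_apply_of_ne_of_ne (by simp [hab]) (by simp [hab])

lemma liftP_swap_tV_of_ne {a b : ℕ} (hab : a ≠ b) (ℓ ℓ' n : ℕ) :
    liftP (Equiv.swap (b, ℓ) (b, ℓ')) (tV a n) = tV a n :=
  liftP_tV_of_fixed (swap_apply_of_fst_ne hab ℓ ℓ' n)

lemma liftP_swap_tV_add (b c i j n : ℕ) :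
    liftP (Equiv.swap (b, c + i) (b, c + j)) (tV b (c + n)) = tV b (c + Equiv.swap i j n) := by
  rw [liftP_swap_tV, ← (add_right_injective c).map_swap]

end Substitution

section BlockPerm

variable (a lo k : ℕ)

lemma intervalPerm_apply (σ : Equiv.Perm (Fin k)) (i : Fin k) :
    intervalPerm lo k σ (lo + 1 + i) = lo + 1 + (σ i : ℕ) :=
  σ.extendDomain_apply_image (intervalEquiv lo k) i

lemma blockPerm_apply_self (σ : Equiv.Perm (Fin k)) (i : Fin k) :
    blockPerm a lo k σ (a, lo + 1 + i) = (a, lo + 1 + (σ i : ℕ)) := by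
  simp [blockPerm, intervalPerm_apply]

lemma blockPerm_apply_of_ne {b : ℕ} (hb : b ≠ a) (σ : Equiv.Perm (Fin k)) (ℓ : ℕ) :
    blockPerm a lo k σ (b, ℓ) = (b, ℓ) := by
  simp [blockPerm, hb]

lemma blockPerm_one : blockPerm a lo k 1 = 1 := by
  ext1 ⟨b, ℓ⟩
  by_cases hb : b = a <;> simp [blockPerm, intervalPerm, hb]

lemma blockPerm_mul (σ τ : Equiv.Perm (Fin k)) :
    blockPerm a lo k (σ * τ) = blockPerm a lo k σ * blockPerm a lo k τ := by
  ext1 ⟨b, ℓ⟩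
  by_cases hb : b = a <;>
    simp [blockPerm, intervalPerm, hb, ← Equiv.Perm.extendDomain_mul]

lemma intervalPerm_swap (i j : Fin k) :
    intervalPerm lo k (Equiv.swap i j) = Equiv.swap (lo + 1 + (i : ℕ)) (lo + 1 + (j : ℕ)) := by
  ext1 ℓ
  by_cases hℓ : lo + 1 ≤ ℓ ∧ ℓ < lo + 1 + k
  · obtain ⟨n, rfl⟩ : ∃ n : Fin k, ℓ = lo + 1 + n := ⟨⟨ℓ - (lo + 1), by omega⟩, by grind⟩
    rw [intervalPerm_apply]
    exact ((add_right_injective (lo + 1)).comp Fin.val_injective).map_swap i j n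
  · rw [intervalPerm, Equiv.Perm.extendDomain_apply_not_subtype _ (intervalEquiv lo k) hℓ,
      Equiv.swap_apply_of_ne_of_ne] <;> omega

lemma blockPerm_swap (i j : Fin k) :
    blockPerm a lo k (Equiv.swap i j) =
      Equiv.swap (a, lo + 1 + (i : ℕ)) (a, lo + 1 + (j : ℕ)) := by
  ext1 ⟨b, ℓ⟩
  by_cases hb : b = a
  · subst hb
    rw [← (Prod.mk_right_injective b).map_swap, ← intervalPerm_swap]
    simp [blockPerm]
  · rw [blockPerm_apply_of_ne a lo k hb, swap_apply_of_fst_ne hb]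

lemma liftP_blockPerm_tV (σ : Equiv.Perm (Fin k)) (i : Fin k) :
    liftP (blockPerm a lo k σ) (tV a (lo + 1 + i)) = tV a (lo + 1 + (σ i : ℕ)) := by
  rw [liftP_tV, blockPerm_apply_self]

lemma liftP_blockPerm_eq_self_of_adjacent_swaps {G : K2}
    (h : ∀ ℓ, lo < ℓ → ℓ < lo + k → liftP (Equiv.swap (a, ℓ) (a, ℓ + 1)) G = G)
    (σ : Equiv.Perm (Fin k)) : liftP (blockPerm a lo k σ) G = G := by
  cases k with
  | zero => rw [Subsingleton.elim σ 1, blockPerm_one, liftP_one]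
  | succ n =>
    have hσ : σ ∈ Submonoid.closure (Set.range fun i : Fin n => Equiv.swap i.castSucc i.succ) :=
      Equiv.Perm.mclosure_swap_castSucc_succ n ▸ Submonoid.mem_top σ
    induction hσ using Submonoid.closure_induction with
    | mem _ hx =>
      obtain ⟨i, rfl⟩ := hx
      rw [blockPerm_swap, Fin.val_castSucc, Fin.val_succ, ← add_assoc]
      exact h _ (by omega) (by omega)
    | one => rw [blockPerm_one, liftP_one]
    | mul σ τ _ _ hσ hτ => rw [blockPerm_mul, liftP_mul, hτ, hσ]

end BlockPerm

section Nonvanishing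

lemma C_mul_X_sub_C_mul_X_ne_zero {ι R : Type*} [CommRing R] {c : R} (hc : c ≠ 0) (d : R)
    {i j : ι} (hij : i ≠ j) : (C c * X i - C d * X j : MvPolynomial ι R) ≠ 0 := by
  classical
  intro h
  have hcoeff := congrArg (coeff (Finsupp.single i 1)) h
  rw [coeff_sub, coeff_C_mul, coeff_C_mul, coeff_X, coeff_X, if_pos rfl,
    if_neg (by simpa [Finsupp.single_left_inj] using hij.symm)] at hcoeff
  exact hc (by simpa using hcoeff)

lemma algebraMap_mul_tV_sub_ne_zero {c : F0} (hc : c ≠ 0) (d : F0) {a ℓ b ℓ' : ℕ}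
    (h : (a, ℓ) ≠ (b, ℓ')) :
    algebraMap F0 K2 c * tV a ℓ - algebraMap F0 K2 d * tV b ℓ' ≠ 0 := by
  have hne := (FaithfulSMul.algebraMap_eq_zero_iff (MvPolynomial (ℕ × ℕ) F0) K2).not.2
    (C_mul_X_sub_C_mul_X_ne_zero hc d h)
  rwa [map_sub, map_mul, map_mul] at hne

lemma tV_sub_tV_ne_zero {a ℓ b ℓ' : ℕ} (h : (a, ℓ) ≠ (b, ℓ')) : tV a ℓ - tV b ℓ' ≠ 0 := by
  simpa using algebraMap_mul_tV_sub_ne_zero one_ne_zero 1 h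

lemma tV_ne_zero (a ℓ : ℕ) : tV a ℓ ≠ 0 := by
  simpa using algebraMap_mul_tV_sub_ne_zero (a := a) (ℓ := ℓ) (b := a + 1) (ℓ' := ℓ) one_ne_zero 0
    (by simp)

lemma q2_eq_algebraMap : q2 = algebraMap F0 K2 RatFunc.X := rfl

lemma q2_inv_mul_tV_sub_q2_mul_tV_ne_zero {a ℓ b ℓ' : ℕ} (h : (a, ℓ) ≠ (b, ℓ')) :
    q2⁻¹ * tV a ℓ - q2 * tV b ℓ' ≠ 0 := by
  rw [q2_eq_algebraMap, ← map_inv₀]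
  exact algebraMap_mul_tV_sub_ne_zero (inv_ne_zero RatFunc.X_ne_zero) _ h

end Nonvanishing

section SymBlock

variable (a lo k : ℕ)

/-- The variables `t^a_{lo+1}, …, t^a_{lo+k}` over which `symBlock a lo k` symmetrizes. -/
def blockVars : Fin k → K2 := fun i => tV a (lo + 1 + i)

lemma liftP_blockPerm_comp_blockVars (σ : Equiv.Perm (Fin k)) :
    liftP (blockPerm a lo k σ) ∘ blockVars a lo k = blockVars a lo k ∘ σ :=
  funext (liftP_blockPerm_tV a lo k σ)

lemma pairwise_blockVars_ne_zero :
    Pairwise fun i j => q2⁻¹ * blockVars a lo k i - q2 * blockVars a lo k j ≠ 0 :=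
  fun i j hij => q2_inv_mul_tV_sub_q2_mul_tV_ne_zero (by simpa [Fin.val_inj] using hij)

lemma symBlock_eq_sum_qWeight (G : K2) :
    symBlock a lo k G =
      ∑ σ, qWeight q2 (blockVars a lo k) σ * liftP (blockPerm a lo k σ) G := rfl

lemma symBlock_add (G H : K2) :
    symBlock a lo k (G + H) = symBlock a lo k G + symBlock a lo k H := by
  simp only [symBlock, map_add, mul_add, Finset.sum_add_distrib]

lemma symBlock_mul_of_invariant {G : K2} (hG : ∀ σ, liftP (blockPerm a lo k σ) G = G) (H : K2) :
    symBlock a lo k (G * H) = G * symBlock a lo k H := by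
  simp only [symBlock, map_mul, hG, Finset.mul_sum, mul_left_comm]

lemma symBlock_qWeight_mul_liftP (τ : Equiv.Perm (Fin k)) (G : K2) :
    symBlock a lo k (qWeight q2 (blockVars a lo k) τ * liftP (blockPerm a lo k τ) G) =
      symBlock a lo k G := by
  rw [symBlock_eq_sum_qWeight, symBlock_eq_sum_qWeight]
  refine Fintype.sum_equiv (Equiv.mulRight τ) _ _ fun σ => ?_
  have hw : liftP (blockPerm a lo k σ) (qWeight q2 (blockVars a lo k) τ) =
      qWeight q2 (blockVars a lo k ∘ σ) τ := by
    rw [map_qWeight, liftP_q2, liftP_blockPerm_comp_blockVars]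
  rw [Equiv.coe_mulRight, qWeight_mul (pairwise_blockVars_ne_zero a lo k), blockPerm_mul,
    liftP_mul, map_mul, hw, mul_assoc]

lemma symBlock_eq_of_swap_invariant {i j : Fin k} (hij : (j : ℕ) = i + 1) {G H : K2}
    (h : liftP (blockPerm a lo k (Equiv.swap i j))
        ((q2⁻¹ * blockVars a lo k i - q2 * blockVars a lo k j) * (G - H)) =
      (q2⁻¹ * blockVars a lo k i - q2 * blockVars a lo k j) * (G - H)) :
    symBlock a lo k G = symBlock a lo k H := by
  set w := qWeight q2 (blockVars a lo k) (Equiv.swap i j) with hw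
  set τ := liftP (blockPerm a lo k (Equiv.swap i j))
  have hvar (n : Fin k) : τ (blockVars a lo k n) = blockVars a lo k (Equiv.swap i j n) :=
    liftP_blockPerm_tV a lo k (Equiv.swap i j) n
  have hne : q2⁻¹ * blockVars a lo k i - q2 * blockVars a lo k j ≠ 0 :=
    pairwise_blockVars_ne_zero a lo k (by grind)
  have htwist : G + w * τ G = H + w * τ H := by
    simp only [map_mul, map_sub, map_inv₀, hvar, Equiv.swap_apply_left, Equiv.swap_apply_right,
      show τ q2 = q2 from liftP_q2 _] at h
    rw [hw, qWeight_swap_of_val_eq_succ q2 _ hij, div_mul_eq_mul_div, div_mul_eq_mul_div,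
      add_div' _ _ _ hne, add_div' _ _ _ hne, div_left_inj' hne]
    linear_combination -h
  have hdouble (F : K2) : symBlock a lo k (F + w * τ F) = 2 * symBlock a lo k F := by
    rw [symBlock_add, symBlock_qWeight_mul_liftP, two_mul]
  exact mul_left_cancel₀ two_ne_zero (by rw [← hdouble, htwist, hdouble])

lemma liftP_symBlock {e : Equiv.Perm (ℕ × ℕ)} (he : ∀ ℓ, e (a, ℓ) = (a, ℓ)) (G : K2) :
    liftP e (symBlock a lo k G) = symBlock a lo k (liftP e G) := by
  have hcomm (σ : Equiv.Perm (Fin k)) : e * blockPerm a lo k σ = blockPerm a lo k σ * e := by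
    refine Equiv.Perm.Disjoint.commute fun ⟨b, ℓ⟩ => ?_
    by_cases hb : b = a
    · exact Or.inl (hb ▸ he ℓ)
    · exact Or.inr (blockPerm_apply_of_ne a lo k hb σ ℓ)
  simp only [symBlock, map_sum, map_mul, map_prod, map_div₀, map_sub, map_inv₀, liftP_q2,
    liftP_tV_of_fixed (he _), ← liftP_mul, hcomm]

end SymBlock

section Exchange

/-- The factor `(y/x) / (1 - y/x)` of `U`. -/
def diagFactor {K : Type*} [Field K] (x y : K) : K := y / x / (1 - y / x)

/-- The factor `(q⁻¹ - q y/x) / (1 - y/x)` of `U`. -/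
def crossFactor {K : Type*} [Field K] (q x y : K) : K := (q⁻¹ - q * y / x) / (1 - y / x)

lemma diagFactor_crossFactor_exchange {K : Type*} [Field K] (q : K) {x₁ x₂ y₁ y₂ : K}
    (hx₁ : x₁ ≠ 0) (hx₂ : x₂ ≠ 0) (h₁₁ : x₁ - y₁ ≠ 0) (h₁₂ : x₁ - y₂ ≠ 0) (h₂₁ : x₂ - y₁ ≠ 0)
    (h₂₂ : x₂ - y₂ ≠ 0) :
    (q⁻¹ * y₁ - q * y₂) * (diagFactor x₁ y₁ * diagFactor x₂ y₂ * crossFactor q x₂ y₁ -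
        diagFactor x₂ y₁ * diagFactor x₁ y₂ * crossFactor q x₁ y₁) =
      (q⁻¹ * y₂ - q * y₁) * (diagFactor x₁ y₂ * diagFactor x₂ y₁ * crossFactor q x₂ y₂ -
        diagFactor x₂ y₂ * diagFactor x₁ y₁ * crossFactor q x₁ y₂) := by
  have hdiag {x : K} (hx : x ≠ 0) (y : K) : diagFactor x y = y / (x - y) := by
    rw [diagFactor, one_sub_div hx, div_div_div_cancel_right₀ hx]
  have hcross {x : K} (hx : x ≠ 0) (y : K) :
      crossFactor q x y = (q⁻¹ * x - q * y) / (x - y) := by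
    rw [crossFactor, one_sub_div hx, sub_div' hx, div_div_div_cancel_right₀ hx]
  simp only [hdiag hx₁, hdiag hx₂, hcross hx₁, hcross hx₂]
  generalize q⁻¹ = p
  field_simp
  ring

variable (x y : ℕ → K2) (k i : ℕ)

/-- The pairs `m < n < k` other than `(i, i + 1)`. Exchanging `i` and `i + 1` in either component
maps this set to itself, so it indexes the part of `Ub` that is symmetric under these exchanges. -/
def offAdjacentPairs : Finset (ℕ × ℕ) :=
  ((Finset.range k ×ˢ Finset.range k).filter fun p => p.1 < p.2).erase (i, i + 1)

lemma mem_offAdjacentPairs {k i : ℕ} {p : ℕ × ℕ} :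
    p ∈ offAdjacentPairs k i ↔ p.1 < p.2 ∧ p.2 < k ∧ ¬(p.1 = i ∧ p.2 = i + 1) := by
  simp only [offAdjacentPairs, Finset.mem_erase, Finset.mem_filter, Finset.mem_product,
    Finset.mem_range, ne_eq, Prod.ext_iff]
  omega

lemma prod_offAdjacentPairs_swap_fst {M : Type*} [CommMonoid M] (g : ℕ → ℕ → M) :
    ∏ p ∈ offAdjacentPairs k i, g (Equiv.swap i (i + 1) p.1) p.2 =
      ∏ p ∈ offAdjacentPairs k i, g p.1 p.2 := by
  refine Finset.prod_equiv ((Equiv.swap i (i + 1)).prodCongr (Equiv.refl ℕ)) (fun p => ?_)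
    fun _ _ => rfl
  simp only [mem_offAdjacentPairs, Equiv.prodCongr_apply, Prod.map, Equiv.refl_apply,
    Equiv.swap_apply_def]
  split_ifs <;> omega

lemma prod_offAdjacentPairs_swap_snd {k i : ℕ} (hi : i + 1 < k) {M : Type*} [CommMonoid M]
    (g : ℕ → ℕ → M) :
    ∏ p ∈ offAdjacentPairs k i, g p.1 (Equiv.swap i (i + 1) p.2) =
      ∏ p ∈ offAdjacentPairs k i, g p.1 p.2 := by
  refine Finset.prod_equiv ((Equiv.refl ℕ).prodCongr (Equiv.swap i (i + 1))) (fun p => ?_)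
    fun _ _ => rfl
  simp only [mem_offAdjacentPairs, Equiv.prodCongr_apply, Prod.map, Equiv.refl_apply,
    Equiv.swap_apply_def]
  split_ifs <;> omega

/-- The product of the factors of `Ub x y k` other than the two diagonal factors of
`(x_{i+1}, y_{i+1})` and `(x_{i+2}, y_{i+2})` and the cross factor of `(x_{i+2}, y_{i+1})`. -/
def UbRest : K2 :=
  (∏ n ∈ ((Finset.range k).erase i).erase (i + 1), diagFactor (x (n + 1)) (y (n + 1))) *
    ∏ p ∈ offAdjacentPairs k i, crossFactor q2 (x (p.2 + 1)) (y (p.1 + 1))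

lemma Ub_eq_prod_diagFactor_mul_prod_crossFactor :
    Ub x y k = (∏ n ∈ Finset.range k, diagFactor (x (n + 1)) (y (n + 1))) *
      ∏ p ∈ (Finset.range k ×ˢ Finset.range k).filter (fun p => p.1 < p.2),
        crossFactor q2 (x (p.2 + 1)) (y (p.1 + 1)) := rfl

lemma Ub_eq_mul_UbRest {k i : ℕ} (hi : i + 1 < k) :
    Ub x y k = diagFactor (x (i + 1)) (y (i + 1)) * diagFactor (x (i + 2)) (y (i + 2)) *
      crossFactor q2 (x (i + 2)) (y (i + 1)) * UbRest x y k i := by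
  have hdiag : ∏ n ∈ Finset.range k, diagFactor (x (n + 1)) (y (n + 1)) =
      diagFactor (x (i + 1)) (y (i + 1)) * (diagFactor (x (i + 2)) (y (i + 2)) *
        ∏ n ∈ ((Finset.range k).erase i).erase (i + 1), diagFactor (x (n + 1)) (y (n + 1))) := by
    rw [Finset.mul_prod_erase _ (fun n => diagFactor (x (n + 1)) (y (n + 1))) (a := i + 1)
        (by simpa using hi),
      Finset.mul_prod_erase _ (fun n => diagFactor (x (n + 1)) (y (n + 1)))
        (Finset.mem_range.2 (by omega))]
  have hcross : ∏ p ∈ (Finset.range k ×ˢ Finset.range k).filter (fun p => p.1 < p.2),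
      crossFactor q2 (x (p.2 + 1)) (y (p.1 + 1)) = crossFactor q2 (x (i + 2)) (y (i + 1)) *
        ∏ p ∈ offAdjacentPairs k i, crossFactor q2 (x (p.2 + 1)) (y (p.1 + 1)) :=
    (Finset.mul_prod_erase _ (fun p : ℕ × ℕ => crossFactor q2 (x (p.2 + 1)) (y (p.1 + 1)))
      (a := (i, i + 1)) (by simp; omega)).symm
  rw [Ub_eq_prod_diagFactor_mul_prod_crossFactor, hdiag, hcross, UbRest]
  ring

lemma swap_succ_apply_succ (n : ℕ) :
    Equiv.swap (i + 1) (i + 2) (n + 1) = Equiv.swap i (i + 1) n + 1 :=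
  ((add_left_injective 1).map_swap i (i + 1) n).symm

lemma UbRest_comp_swap_left {k i : ℕ} (hi : i + 1 < k) :
    UbRest (x ∘ Equiv.swap (i + 1) (i + 2)) y k i = UbRest x y k i := by
  simp only [UbRest, Function.comp_apply, swap_succ_apply_succ]
  congr 1
  · refine Finset.prod_congr rfl fun n hn => ?_
    rw [Equiv.swap_apply_of_ne_of_ne (by grind) (by grind)]
  · exact prod_offAdjacentPairs_swap_snd hi fun m n => crossFactor q2 (x (n + 1)) (y (m + 1))

lemma UbRest_comp_swap_right :
    UbRest x (y ∘ Equiv.swap (i + 1) (i + 2)) k i = UbRest x y k i := by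
  simp only [UbRest, Function.comp_apply, swap_succ_apply_succ]
  congr 1
  · refine Finset.prod_congr rfl fun n hn => ?_
    rw [Equiv.swap_apply_of_ne_of_ne (by grind) (by grind)]
  · exact prod_offAdjacentPairs_swap_fst k i fun m n => crossFactor q2 (x (n + 1)) (y (m + 1))

lemma Ub_exchange {k i : ℕ} (hi : i + 1 < k) (hx : ∀ n, x n ≠ 0) (hxy : ∀ m n, x m - y n ≠ 0) :
    (q2⁻¹ * y (i + 1) - q2 * y (i + 2)) *
        (Ub x y k - Ub (x ∘ Equiv.swap (i + 1) (i + 2)) y k) =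
      (q2⁻¹ * y (i + 2) - q2 * y (i + 1)) *
        (Ub x (y ∘ Equiv.swap (i + 1) (i + 2)) k -
          Ub (x ∘ Equiv.swap (i + 1) (i + 2)) (y ∘ Equiv.swap (i + 1) (i + 2)) k) := by
  simp only [Ub_eq_mul_UbRest _ _ hi, UbRest_comp_swap_left _ _ hi, UbRest_comp_swap_right,
    Function.comp_apply, Equiv.swap_apply_left, Equiv.swap_apply_right]
  linear_combination UbRest x y k i * diagFactor_crossFactor_exchange q2
    (hx (i + 1)) (hx (i + 2)) (hxy (i + 1) (i + 1)) (hxy (i + 1) (i + 2)) (hxy (i + 2) (i + 1))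
    (hxy (i + 2) (i + 2))

lemma liftP_Ub {x y x' y' : ℕ → K2} {e : Equiv.Perm (ℕ × ℕ)}
    (hx : ∀ n, liftP e (x (n + 1)) = x' (n + 1)) (hy : ∀ n, liftP e (y (n + 1)) = y' (n + 1)) :
    liftP e (Ub x y k) = Ub x' y' k := by
  simp only [Ub, map_mul, map_prod, map_div₀, map_sub, map_one, map_inv₀, liftP_q2, hx, hy]

lemma liftP_swap_mul_Ub_sub_Ub {a lo k i : ℕ} (hi : i + 1 < k) {x : ℕ → K2}
    (hx : ∀ n, x n ≠ 0) (hxa : ∀ m n, x m - tV a n ≠ 0)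
    (hfix : ∀ n, liftP (Equiv.swap (a, lo + (i + 1)) (a, lo + (i + 2))) (x n) = x n) :
    liftP (Equiv.swap (a, lo + (i + 1)) (a, lo + (i + 2)))
        ((q2⁻¹ * tV a (lo + (i + 1)) - q2 * tV a (lo + (i + 2))) *
          (Ub x (fun n => tV a (lo + n)) k -
            Ub (x ∘ Equiv.swap (i + 1) (i + 2)) (fun n => tV a (lo + n)) k)) =
      (q2⁻¹ * tV a (lo + (i + 1)) - q2 * tV a (lo + (i + 2))) *
        (Ub x (fun n => tV a (lo + n)) k -
          Ub (x ∘ Equiv.swap (i + 1) (i + 2)) (fun n => tV a (lo + n)) k) := by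
  have hy (n : ℕ) := liftP_swap_tV_add a lo (i + 1) (i + 2) n
  have hU (x' : ℕ → K2) (hfix' : ∀ n, liftP _ (x' n) = x' n) :
      liftP (Equiv.swap (a, lo + (i + 1)) (a, lo + (i + 2))) (Ub x' (fun n => tV a (lo + n)) k) =
        Ub x' ((fun n => tV a (lo + n)) ∘ Equiv.swap (i + 1) (i + 2)) k :=
    liftP_Ub k (fun n => hfix' (n + 1)) fun n => hy (n + 1)
  refine Eq.trans ?_ (Ub_exchange x _ hi hx fun m n => hxa m (lo + n)).symm
  rw [← hU x hfix, ← hU (x ∘ _) fun n => hfix _]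
  simp only [map_sub, map_mul, map_inv₀, liftP_q2, hy, Equiv.swap_apply_left,
    Equiv.swap_apply_right]

lemma liftP_swap_symBlock_Ub_mul {a b lo c k i : ℕ} (hab : a ≠ b) (hi : i + 1 < k) {F : K2}
    (hFb : liftP (Equiv.swap (b, c + (i + 1)) (b, c + (i + 2))) F = F)
    (hFa : liftP (Equiv.swap (a, lo + (i + 1)) (a, lo + (i + 2))) F = F) :
    liftP (Equiv.swap (b, c + (i + 1)) (b, c + (i + 2)))
        (symBlock a lo k (Ub (fun n => tV b (c + n)) (fun n => tV a (lo + n)) k * F)) =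
      symBlock a lo k (Ub (fun n => tV b (c + n)) (fun n => tV a (lo + n)) k * F) := by
  have hUb : liftP (Equiv.swap (b, c + (i + 1)) (b, c + (i + 2)))
      (Ub (fun n => tV b (c + n)) (fun n => tV a (lo + n)) k) =
        Ub ((fun n => tV b (c + n)) ∘ Equiv.swap (i + 1) (i + 2)) (fun n => tV a (lo + n)) k :=
    liftP_Ub k (fun n => liftP_swap_tV_add b c (i + 1) (i + 2) (n + 1))
      fun n => liftP_swap_tV_of_ne hab _ _ _
  rw [liftP_symBlock a lo k (swap_apply_of_fst_ne hab _ _), map_mul, hFb, hUb]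
  refine (symBlock_eq_of_swap_invariant a lo k (i := ⟨i, by omega⟩) (j := ⟨i + 1, hi⟩) rfl ?_).symm
  have hvar (n : ℕ) : lo + 1 + n = lo + (n + 1) := by omega
  rw [← sub_mul, ← mul_assoc, map_mul, blockPerm_swap]
  simp only [blockVars, hvar]
  rw [hFa, liftP_swap_mul_Ub_sub_Ub hi (fun n => tV_ne_zero b (c + n))
    (fun m n => tV_sub_tV_ne_zero (by simp [hab.symm])) fun n => liftP_swap_tV_of_ne hab.symm _ _ _]

end Exchange

section IteratedSymmetrization

variable (N : ℕ) (m : ℕ → ℕ)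

lemma iterSym_mul_of_invariant {k : ℕ} {G : K2}
    (hG : ∀ a, N - k ≤ a → ∀ σ, liftP (blockPerm a 0 (m a) σ) G = G) (H : K2) :
    iterSym N m k (G * H) = G * iterSym N m k H := by
  induction k with
  | zero => rfl
  | succ k ih =>
    rw [iterSym, ih fun a ha => hG a (by omega), symBlock_mul_of_invariant _ _ _ (hG _ (by omega)),
      iterSym]

lemma liftP_iterSym {k : ℕ} {e : Equiv.Perm (ℕ × ℕ)}
    (he : ∀ a, N - k ≤ a → ∀ ℓ, e (a, ℓ) = (a, ℓ)) (G : K2) :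
    liftP e (iterSym N m k G) = iterSym N m k (liftP e G) := by
  induction k with
  | zero => rfl
  | succ k ih =>
    rw [iterSym, liftP_symBlock _ _ _ (he _ (by omega)), ih fun a ha => he a (by omega), iterSym]

/-- The function `Sym_{t^{j+2}} ⋯ Sym_{t^{N-1}} Y` of the theorem. -/
def symY (j : ℕ) : K2 := iterSym N m (N - 2 - j) (Ycur N j m)

variable {N}

lemma Ycur_eq_Ub_mul {j : ℕ} (hj : j + 3 ≤ N) :
    Ycur N j m = Ub (fun i => tV (j + 1) (m (j + 1) - m (j + 2) + i)) (fun i => tV (j + 2) i)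
      (m (j + 2)) * Ycur N (j + 1) m := by
  rw [Ycur, ← Finset.mul_prod_Ioc_eq_prod_Icc (show j + 2 ≤ N - 1 by omega),
    ← Finset.Icc_add_one_left_eq_Ioc]
  rfl

lemma symY_eq_symBlock {j : ℕ} (hj : j + 3 ≤ N) :
    symY N m j = symBlock (j + 2) 0 (m (j + 2))
      (Ub (fun i => tV (j + 1) (m (j + 1) - m (j + 2) + i)) (fun i => tV (j + 2) i) (m (j + 2)) *
        symY N m (j + 1)) := by
  have hk : N - 2 - j = N - 2 - (j + 1) + 1 := by omega
  have ha : N - 1 - (N - 2 - (j + 1)) = j + 2 := by omega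
  rw [symY, hk, iterSym, ha, Ycur_eq_Ub_mul m hj, iterSym_mul_of_invariant, symY]
  intro a haN σ
  exact liftP_Ub _ (fun n => liftP_tV_of_fixed (blockPerm_apply_of_ne a 0 (m a) (by omega) σ _))
    fun n => liftP_tV_of_fixed (blockPerm_apply_of_ne a 0 (m a) (by omega) σ _)

lemma liftP_symY_of_fixed {j : ℕ} (hj : j + 2 ≤ N) {e : Equiv.Perm (ℕ × ℕ)}
    (he : ∀ a, j + 2 ≤ a → ∀ ℓ, e (a, ℓ) = (a, ℓ))
    (hej : ∀ ℓ, m (j + 1) - m (j + 2) < ℓ → e (j + 1, ℓ) = (j + 1, ℓ)) :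
    liftP e (symY N m j) = symY N m j := by
  rw [symY, liftP_iterSym N m fun a ha => he a (by omega), Ycur, map_prod]
  congr 1
  refine Finset.prod_congr rfl fun a ha => ?_
  have hja : j + 2 ≤ a := (Finset.mem_Icc.1 ha).1
  refine liftP_Ub _ (fun n => liftP_tV_of_fixed ?_) fun n => liftP_tV_of_fixed (he a hja _)
  obtain rfl | hlt := hja.eq_or_lt
  · exact hej _ (Nat.lt_add_of_pos_right n.succ_pos)
  · exact he (a - 1) (by omega) _

lemma liftP_swap_symY {j d : ℕ} (hN : j + 2 + d ≤ N) (hm : AntitoneOn m (Set.Icc (j + 1) N))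
    {ℓ : ℕ} (hℓ : m (j + 1) - m (j + 1 + d) < ℓ) (hℓ' : ℓ < m (j + 1) - m (j + 2 + d)) :
    liftP (Equiv.swap (j + 1, ℓ) (j + 1, ℓ + 1)) (symY N m j) = symY N m j := by
  induction d generalizing j ℓ with
  | zero =>
    exact liftP_symY_of_fixed m hN (fun a ha n => swap_apply_of_fst_ne (by omega) _ _ _) fun n hn =>
      Equiv.swap_apply_of_ne_of_ne (by grind) (by grind)
  | succ d ih =>
    have h₁ : m (j + 2) ≤ m (j + 1) := hm (by grind) (by grind) (by omega)
    have h₂ : m (j + 2 + d) ≤ m (j + 2) := hm (by grind) (by grind) (by omega)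
    obtain ⟨i, rfl⟩ : ∃ i, ℓ = m (j + 1) - m (j + 2) + (i + 1) :=
      ⟨ℓ - (m (j + 1) - m (j + 2)) - 1, by grind⟩
    have hprev : liftP (Equiv.swap (j + 1, m (j + 1) - m (j + 2) + (i + 1))
        (j + 1, m (j + 1) - m (j + 2) + (i + 2))) (symY N m (j + 1)) = symY N m (j + 1) :=
      liftP_symY_of_fixed m (by omega) (fun a ha n => swap_apply_of_fst_ne (by omega) _ _ _)
        fun n _ => swap_apply_of_fst_ne (by omega) _ _ _
    have hnext : liftP (Equiv.swap (j + 2, i + 1) (j + 2, i + 2)) (symY N m (j + 1)) =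
        symY N m (j + 1) :=
      ih (by omega) (hm.mono (Set.Icc_subset_Icc_left (by omega))) (by grind) (by grind)
    rw [symY_eq_symBlock m (by omega)]
    simpa using! liftP_swap_symBlock_Ub_mul (lo := 0) (by omega : j + 2 ≠ j + 1) (by grind)
      hprev (by simpa using hnext)

end IteratedSymmetrization

theorem statement10 (N j : ℕ) (m : ℕ → ℕ) (hj : 1 ≤ j) (hjN : j + 2 ≤ N)
    (hmono : ∀ a, j + 1 ≤ a → a < N → m (a + 1) ≤ m a) (hmN : m N = 0) :
    ∀ a, j + 1 ≤ a → a ≤ N - 1 →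
      ∀ σ : Equiv.Perm (Fin (m a - m (a + 1))),
        liftP (blockPerm (j + 1) (m (j + 1) - m a) (m a - m (a + 1)) σ)
            (iterSym N m (N - 2 - j) (Ycur N j m)) =
          iterSym N m (N - 2 - j) (Ycur N j m) := by
  intro a ha haN
  have hm : AntitoneOn m (Set.Icc (j + 1) N) :=
    antitoneOn_of_succ_le Set.ordConnected_Icc fun b _ hb hb' => hmono b hb.1 hb'.2
  have hle : m a ≤ m (j + 1) := hm (by grind) (by grind) ha
  obtain ⟨d, rfl⟩ := Nat.exists_eq_add_of_le ha
  refine liftP_blockPerm_eq_self_of_adjacent_swaps _ _ _ fun ℓ hℓ hℓ' => ?_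
  have hsucc : j + 1 + d + 1 = j + 2 + d := by omega
  rw [hsucc] at hℓ'
  exact liftP_swap_symY m (by omega) hm hℓ (by omega)
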